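/- Up to sign, C is the only nontrivial invariant cone in sl₂(ℝ): if D ⊆ sl₂(ℝ) is a closed convex cone that is pointed (D ∩ (−D) = {0}), generating (D − D = sl₂(ℝ)), and invariant under conjugation by every g ∈ SL₂(ℝ), then D = C or D = −C. -/

import Mathlib

/-!
STATEMENT 12: Up to sign, `C` is the only nontrivial invariant cone in `sl₂(ℝ)`: if
`D ⊆ sl₂(ℝ)` is a closed convex cone, pointed, generating, and invariant under conjugation by
every `g ∈ SL₂(ℝ)`, then `D = C` or `D = −C`.
-/

open Matrix

/-- The invariant positive cone of `sl₂(ℝ)`. -/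
def slCone : Set (Matrix (Fin 2) (Fin 2) ℝ) :=
  {X | ∃ a b c : ℝ, X = !![a, b; c, -a] ∧ 0 ≤ b ∧ c ≤ 0 ∧ a ^ 2 ≤ -(b * c)}

/-- The positively oriented generator of the rotation subalgebra of `sl₂(ℝ)`. -/
def rotationGenerator : Matrix (Fin 2) (Fin 2) ℝ := !![0, 1; -1, 0]

theorem eq_of_trace_eq_zero {X : Matrix (Fin 2) (Fin 2) ℝ} (h : X.trace = 0) :
    X = !![X 0 0, X 0 1; X 1 0, -X 0 0] := by
  rw [trace_fin_two] at h
  ext i j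
  fin_cases i <;> fin_cases j <;> simp
  linarith

/-- Invariance under `SL₂(ℝ)` extends to intertwiners of positive determinant. -/
theorem mem_of_intertwine {D : Set (Matrix (Fin 2) (Fin 2) ℝ)}
    (hinv : ∀ g : Matrix (Fin 2) (Fin 2) ℝ, g.det = 1 → (fun X => g * X * g⁻¹) '' D = D)
    {X Y g : Matrix (Fin 2) (Fin 2) ℝ} (hX : X ∈ D) (hg : 0 < g.det) (h : g * X = Y * g) :
    Y ∈ D := by
  have hs : 0 < √g.det := Real.sqrt_pos.mpr hg
  have hdet : ((√g.det)⁻¹ • g).det = 1 := by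
    rw [det_smul, Fintype.card_fin, inv_pow, Real.sq_sqrt hg.le, inv_mul_cancel₀ hg.ne']
  rw [← hinv _ hdet]
  refine ⟨X, hX, ?_⟩
  change (√g.det)⁻¹ • g * X * ((√g.det)⁻¹ • g)⁻¹ = Y
  rw [smul_mul, h, ← Matrix.mul_smul,
    mul_nonsing_inv_cancel_right _ _ (by rw [hdet]; exact isUnit_one)]

/-- A hyperbolic element of `sl₂(ℝ)` is conjugate to its negative, so a pointed invariant set
contains none. -/
theorem sq_add_mul_nonpos_of_mem {D : Set (Matrix (Fin 2) (Fin 2) ℝ)}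
    (hpointed : D ∩ (-D) = {0})
    (hconj : ∀ X Y g : Matrix (Fin 2) (Fin 2) ℝ, X ∈ D → 0 < g.det → g * X = Y * g → Y ∈ D)
    {a b c : ℝ} (hX : !![a, b; c, -a] ∈ D) : a ^ 2 + b * c ≤ 0 := by
  by_contra! hs
  have hneg : -!![a, b; c, -a] ∈ D := by
    refine hconj _ _ ((2 * (a ^ 2 + b * c)) • rotationGenerator - (c - b) • !![a, b; c, -a])
      hX ?_ ?_
    · have : 0 < 4 * (a ^ 2 + b * c) ^ 2 + (a ^ 2 + b * c) * (c - b) ^ 2 := by positivity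
      simp [rotationGenerator, det_fin_two]
      linarith
    · ext i j
      fin_cases i <;> fin_cases j <;>
        simp [rotationGenerator, Matrix.mul_apply, Fin.sum_univ_two] <;> ring
  have h0 : !![a, b; c, -a] ∈ D ∩ (-D) := ⟨hX, hneg⟩
  rw [hpointed, Set.mem_singleton_iff] at h0
  have ha : a = 0 := by simpa using congrFun (congrFun h0 0) 0
  have hb : b = 0 := by simpa using congrFun (congrFun h0 0) 1
  simp [ha, hb] at hs

theorem rotation_part_mem {D : Set (Matrix (Fin 2) (Fin 2) ℝ)}
    (hadd : ∀ X ∈ D, ∀ Y ∈ D, X + Y ∈ D)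
    (hconj : ∀ X Y g : Matrix (Fin 2) (Fin 2) ℝ, X ∈ D → 0 < g.det → g * X = Y * g → Y ∈ D)
    {a b c : ℝ} (hX : !![a, b; c, -a] ∈ D) : (b - c) • rotationGenerator ∈ D := by
  have hY : !![-a, -c; -b, a] ∈ D := by
    refine hconj _ _ rotationGenerator hX (by simp [rotationGenerator, det_fin_two]) ?_
    simp [rotationGenerator]
  convert hadd _ hX _ hY using 1
  ext i j
  fin_cases i <;> fin_cases j <;> simp [rotationGenerator] <;> ring

/-- Every elliptic element of positive orientation is conjugate to a positive multiple of
`rotationGenerator`. -/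
theorem mem_of_elliptic {D : Set (Matrix (Fin 2) (Fin 2) ℝ)}
    (hcone : ∀ t : ℝ, 0 ≤ t → ∀ X ∈ D, t • X ∈ D)
    (hconj : ∀ X Y g : Matrix (Fin 2) (Fin 2) ℝ, X ∈ D → 0 < g.det → g * X = Y * g → Y ∈ D)
    (hJ : rotationGenerator ∈ D) {a b c : ℝ} (hb : 0 < b) (h : a ^ 2 < -(b * c)) :
    !![a, b; c, -a] ∈ D := by
  have hpos : 0 < -(b * c) - a ^ 2 := by linarith
  have hd : 0 < √(-(b * c) - a ^ 2) := Real.sqrt_pos.mpr hpos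
  have hsq := Real.sq_sqrt hpos.le
  set d := √(-(b * c) - a ^ 2)
  refine hconj (d • rotationGenerator) _ !![b, 0; -a, d] (hcone d hd.le _ hJ) ?_ ?_
  · simp only [det_fin_two_of]
    nlinarith [mul_pos hb hd]
  · ext i j
    fin_cases i <;> fin_cases j <;>
      simp [rotationGenerator, Matrix.mul_apply, Fin.sum_univ_two] <;> linarith

theorem eq_slCone_of_rotationGenerator_mem {D : Set (Matrix (Fin 2) (Fin 2) ℝ)}
    (hsl : ∀ X ∈ D, X.trace = 0) (hclosed : IsClosed D)
    (hadd : ∀ X ∈ D, ∀ Y ∈ D, X + Y ∈ D)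
    (hcone : ∀ t : ℝ, 0 ≤ t → ∀ X ∈ D, t • X ∈ D)
    (hpointed : D ∩ (-D) = {0})
    (hconj : ∀ X Y g : Matrix (Fin 2) (Fin 2) ℝ, X ∈ D → 0 < g.det → g * X = Y * g → Y ∈ D)
    (hJ : rotationGenerator ∈ D) : D = slCone := by
  apply Set.Subset.antisymm
  · intro X hX
    have hform := eq_of_trace_eq_zero (hsl X hX)
    generalize X 0 0 = a, X 0 1 = b, X 1 0 = c at hform
    subst hform
    have hs := sq_add_mul_nonpos_of_mem hpointed hconj hX
    have hbc : 0 ≤ b - c := by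
      by_contra! hlt
      have hneg : -rotationGenerator ∈ D := by
        have := hcone (c - b)⁻¹ (inv_nonneg.mpr (by linarith)) _
          (rotation_part_mem hadd hconj hX)
        rwa [smul_smul, ← neg_sub c b, mul_neg, inv_mul_cancel₀ (by linarith), neg_one_smul]
          at this
      have h0 : rotationGenerator ∈ D ∩ (-D) := ⟨hJ, hneg⟩
      rw [hpointed, Set.mem_singleton_iff] at h0
      simpa [rotationGenerator] using congrFun (congrFun h0 0) 1
    exact ⟨a, b, c, rfl, by nlinarith [sq_nonneg a], by nlinarith [sq_nonneg a], by linarith⟩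
  · rintro _ ⟨a, b, c, rfl, hb, hc, h⟩
    have hlim : Filter.Tendsto
        (fun ε : ℝ => !![a, b; c, -a] + ε • rotationGenerator) (nhdsWithin 0 (Set.Ioi 0))
        (nhds !![a, b; c, -a]) := by
      have hcont : Continuous (fun ε : ℝ => !![a, b; c, -a] + ε • rotationGenerator) := by
        fun_prop
      simpa using (hcont.tendsto 0).mono_left nhdsWithin_le_nhds
    refine hclosed.mem_of_tendsto hlim ?_
    filter_upwards [self_mem_nhdsWithin] with ε (hε : 0 < ε)
    have hmem := mem_of_elliptic hcone hconj hJ (a := a) (b := b + ε) (c := c - ε)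
      (by linarith) (by nlinarith [mul_nonneg hε.le hb, mul_nonneg hε.le (neg_nonneg.mpr hc)])
    convert hmem using 1
    ext i j
    fin_cases i <;> fin_cases j <;> simp [rotationGenerator, sub_eq_add_neg]

theorem invariant_cone_sl2_unique (D : Set (Matrix (Fin 2) (Fin 2) ℝ))
    (hsl : ∀ X ∈ D, X.trace = 0)
    (hclosed : IsClosed D)
    (hconvex : Convex ℝ D)
    (hcone : ∀ t : ℝ, 0 ≤ t → ∀ X ∈ D, t • X ∈ D)
    (hpointed : D ∩ (-D) = {0})
    (hgen : ∀ X : Matrix (Fin 2) (Fin 2) ℝ, X.trace = 0 → ∃ Y ∈ D, ∃ Z ∈ D, X = Y - Z)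
    (hinv : ∀ g : Matrix (Fin 2) (Fin 2) ℝ, g.det = 1 → (fun X => g * X * g⁻¹) '' D = D) :
    D = slCone ∨ D = -slCone := by
  have hconj : ∀ X Y g : Matrix (Fin 2) (Fin 2) ℝ, X ∈ D → 0 < g.det → g * X = Y * g → Y ∈ D :=
    fun _ _ _ => mem_of_intertwine hinv
  have hadd : ∀ X ∈ D, ∀ Y ∈ D, X + Y ∈ D := by
    intro X hX Y hY
    have := hcone 2 zero_le_two _
      (hconvex hX hY (a := 1 / 2) (b := 1 / 2) (by norm_num) (by norm_num) (by norm_num))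
    simpa [smul_smul] using this
  obtain ⟨a, b, c, hX, hbc⟩ : ∃ a b c : ℝ, !![a, b; c, -a] ∈ D ∧ b - c ≠ 0 := by
    by_contra! hall
    have hzero : ∀ X ∈ D, X 0 1 - X 1 0 = 0 := fun X hX =>
      hall (X 0 0) _ _ (eq_of_trace_eq_zero (hsl X hX) ▸ hX)
    obtain ⟨Y, hY, Z, hZ, h⟩ := hgen rotationGenerator (by simp [rotationGenerator, trace_fin_two])
    have h01 : (1 : ℝ) = Y 0 1 - Z 0 1 := by
      simpa [rotationGenerator] using congrFun (congrFun h 0) 1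
    have h10 : (-1 : ℝ) = Y 1 0 - Z 1 0 := by
      simpa [rotationGenerator] using congrFun (congrFun h 1) 0
    linarith [hzero Y hY, hzero Z hZ]
  have hrot := rotation_part_mem hadd hconj hX
  rcases hbc.lt_or_gt with hneg | hpos
  · right
    rw [← neg_eq_iff_eq_neg]
    refine eq_slCone_of_rotationGenerator_mem (D := -D) ?_ hclosed.neg ?_ ?_ ?_ ?_ ?_
    · intro X hX
      simpa using hsl _ hX
    · intro X hX Y hY
      rw [Set.mem_neg, neg_add]
      exact hadd _ hX _ hY
    · intro t ht X hX
      rw [Set.mem_neg, ← smul_neg]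
      exact hcone t ht _ hX
    · rw [neg_neg, Set.inter_comm, hpointed]
    · intro X Y g hX hg h
      exact hconj (-X) (-Y) g hX hg (by rw [Matrix.mul_neg, Matrix.neg_mul, h])
    · have := hcone (-(b - c))⁻¹ (inv_nonneg.mpr (by linarith)) _ hrot
      rwa [smul_smul, inv_neg, neg_mul, inv_mul_cancel₀ hbc, neg_one_smul] at this
  · left
    refine eq_slCone_of_rotationGenerator_mem hsl hclosed hadd hcone hpointed hconj ?_
    have := hcone (b - c)⁻¹ (inv_nonneg.mpr hpos.le) _ hrot
    rwa [smul_smul, inv_mul_cancel₀ hbc, one_smul] at this
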